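/- Let d ≥ 1, k ≥ 1 and a be natural numbers with a ≥ 2^(k+2), and let n_0, n_1, …, n_k be natural numbers with n_0 = a such that for every j with 1 ≤ j ≤ k one has 2·n_j ≤ n_{j-1} and (n_{j-1} : ℝ) ≥ a·2^{-(j-1)} - 2. Then the product over j from 1 to k of ( (d-1)/d + (1/d)·((n_j+1)(n_j+2))/((n_{j-1}+1)(n_{j-1}+2)) ) is at most exp(12/(4d-3))·(1 - 3/(4d))^k, where all quotients and powers are taken in the real numbers. -/

import Mathlib

/-!
By halving, a cell with `m` points has a child with at most `m / 2`, and
`(m / 2 + 1) (m / 2 + 2) / ((m + 1) (m + 2)) = 1 / 4 + 3 / (4 (m + 1))`. Hence each factor is at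
most `1 - 3 / (4 d)` times a relative error `exp (3 / (4 d - 3) / (m + 1))`. The number of points
at least doubles at each step up the tree, so the sum of the exponents is dominated by its last
term, up to a factor `2`. Only the size of the last cell that is split enters the bound.
-/

open Finset Real

section Doubling

variable {𝕜 : Type*} [Field 𝕜] [LinearOrder 𝕜] [IsStrictOrderedRing 𝕜] {x : ℕ → 𝕜} {k : ℕ}

theorem pos_of_forall_two_mul_succ_le (hx : ∀ i < k, 2 * x (i + 1) ≤ x i) (hk : 0 < x k)
    {i : ℕ} (hi : i ≤ k) : 0 < x i := by
  induction hi using Nat.decreasingInduction with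
  | self => exact hk
  | of_succ i hi ih => linarith [hx i hi]

theorem sum_range_inv_le_two_mul_inv (hx : ∀ i < k, 2 * x (i + 1) ≤ x i) (hk : 0 < x k) :
    ∑ i ∈ range (k + 1), (x i)⁻¹ ≤ 2 * (x k)⁻¹ := by
  induction k with
  | zero => simpa [two_mul] using hk.le
  | succ k ih =>
    have hstep : 2 * x (k + 1) ≤ x k := hx k k.lt_succ_self
    calc ∑ i ∈ range (k + 2), (x i)⁻¹
        = ∑ i ∈ range (k + 1), (x i)⁻¹ + (x (k + 1))⁻¹ := sum_range_succ _ _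
      _ ≤ 2 * (x k)⁻¹ + (x (k + 1))⁻¹ := by
        gcongr
        exact ih (fun i hi ↦ hx i (by omega)) (by linarith)
      _ ≤ 2 * (2 * x (k + 1))⁻¹ + (x (k + 1))⁻¹ := by gcongr
      _ = 2 * (x (k + 1))⁻¹ := by ring

end Doubling

/-- The expected factor by which the squared side length of a cell along a fixed coordinate shrinks
when a cell with `m` points is split along a uniformly random one of `d` coordinates and the child
that is followed keeps `p` points. The ratio `(p + 1) (p + 2) / ((m + 1) (m + 2))` is the second
moment of the `Beta (p + 1, m - p)` distribution. -/
noncomputable def sqSideFactor (d m p : ℝ) : ℝ :=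
  (d - 1) / d + (1 / d) * ((p + 1) * (p + 2)) / ((m + 1) * (m + 2))

section SqSideFactor

variable {d m p : ℝ}

theorem sqSideFactor_nonneg (hd : 1 ≤ d) (hm : 0 ≤ m) (hp : 0 ≤ p) : 0 ≤ sqSideFactor d m p := by
  have : 0 ≤ d - 1 := sub_nonneg.2 hd
  unfold sqSideFactor
  positivity

theorem beta_second_moment_le (hp : 0 ≤ p) (hpm : 2 * p ≤ m) :
    (p + 1) * (p + 2) / ((m + 1) * (m + 2)) ≤ 1 / 4 + 3 / 4 * (m + 1)⁻¹ := by
  have hm : 0 ≤ m := by linarith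
  have hp' : p ≤ m / 2 := by linarith
  calc (p + 1) * (p + 2) / ((m + 1) * (m + 2))
      ≤ (m / 2 + 1) * (m / 2 + 2) / ((m + 1) * (m + 2)) := by gcongr
    _ = 1 / 4 + 3 / 4 * (m + 1)⁻¹ := by field_simp; ring

theorem one_sub_three_div_four_mul_nonneg (hd : 3 / 4 ≤ d) : 0 ≤ 1 - 3 / (4 * d) := by
  rw [sub_nonneg, div_le_one (by linarith)]
  linarith

theorem sqSideFactor_le (hd : 3 / 4 < d) (hp : 0 ≤ p) (hpm : 2 * p ≤ m) :
    sqSideFactor d m p ≤ (1 - 3 / (4 * d)) * exp (3 / (4 * d - 3) * (m + 1)⁻¹) := by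
  have : 0 < d := by linarith
  have hd₃ : 0 < 4 * d - 3 := by linarith
  have hq : 0 ≤ 1 - 3 / (4 * d) := one_sub_three_div_four_mul_nonneg hd.le
  have hrel : (1 - 3 / (4 * d)) * (3 / (4 * d - 3)) = 3 / (4 * d) := by
    rw [one_sub_div (by positivity), div_mul_div_cancel₀' hd₃.ne']
  calc sqSideFactor d m p
      = (d - 1) / d + 1 / d * ((p + 1) * (p + 2) / ((m + 1) * (m + 2))) := by
        rw [sqSideFactor, mul_div_assoc]
    _ ≤ (d - 1) / d + 1 / d * (1 / 4 + 3 / 4 * (m + 1)⁻¹) := by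
        gcongr
        exact beta_second_moment_le hp hpm
    _ = (1 - 3 / (4 * d)) * (3 / (4 * d - 3) * (m + 1)⁻¹ + 1) := by
        rw [mul_add_one, ← mul_assoc (1 - 3 / (4 * d)), hrel]
        field_simp
        ring
    _ ≤ (1 - 3 / (4 * d)) * exp (3 / (4 * d - 3) * (m + 1)⁻¹) := by
        gcongr
        exact add_one_le_exp _

end SqSideFactor

theorem prod_range_sqSideFactor_le {d : ℝ} (hd : 1 ≤ d) {n : ℕ → ℝ} {k : ℕ}
    (hhalf : ∀ i ≤ k, 2 * n (i + 1) ≤ n i) (hlast : 0 < n k) (hleaf : 0 ≤ n (k + 1)) :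
    ∏ i ∈ range (k + 1), sqSideFactor d (n i) (n (i + 1)) ≤
      exp (3 / (4 * d - 3) * (2 * (n k)⁻¹)) * (1 - 3 / (4 * d)) ^ (k + 1) := by
  have hd₃ : 0 < 4 * d - 3 := by linarith
  have hq : 0 ≤ 1 - 3 / (4 * d) := one_sub_three_div_four_mul_nonneg (by linarith)
  have hpos : ∀ i ≤ k, 0 < n i := fun i ↦
    pos_of_forall_two_mul_succ_le (fun i hi ↦ hhalf i hi.le) hlast
  have hchild : ∀ i ≤ k, 0 ≤ n (i + 1) := fun i hi ↦ by
    obtain rfl | hik := hi.eq_or_lt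
    exacts [hleaf, (hpos (i + 1) hik).le]
  have hle : ∀ i ∈ range (k + 1), i ≤ k := fun i ↦ mem_range_succ_iff.1
  have herror : ∑ i ∈ range (k + 1), (n i + 1)⁻¹ ≤ 2 * (n k)⁻¹ :=
    (sum_le_sum fun i hi ↦ inv_anti₀ (hpos i (hle i hi)) (by linarith)).trans
      (sum_range_inv_le_two_mul_inv (fun i hi ↦ hhalf i hi.le) hlast)
  calc ∏ i ∈ range (k + 1), sqSideFactor d (n i) (n (i + 1))
      ≤ ∏ i ∈ range (k + 1), (1 - 3 / (4 * d)) * exp (3 / (4 * d - 3) * (n i + 1)⁻¹) :=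
        prod_le_prod
          (fun i hi ↦ sqSideFactor_nonneg hd (hpos i (hle i hi)).le (hchild i (hle i hi)))
          (fun i hi ↦ sqSideFactor_le (by linarith) (hchild i (hle i hi)) (hhalf i (hle i hi)))
    _ = exp (3 / (4 * d - 3) * ∑ i ∈ range (k + 1), (n i + 1)⁻¹) *
          (1 - 3 / (4 * d)) ^ (k + 1) := by
        rw [prod_mul_distrib, prod_const, card_range, ← exp_sum, ← mul_sum, mul_comm]
    _ ≤ exp (3 / (4 * d - 3) * (2 * (n k)⁻¹)) * (1 - 3 / (4 * d)) ^ (k + 1) := by gcongr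

theorem six_le_mul_two_rpow_sub_two {a : ℝ} {k : ℕ} (ha : 2 ^ (k + 2) ≤ a) :
    6 ≤ a * 2 ^ (-((k : ℝ) - 1)) - 2 := by
  have hpow : (2 : ℝ) ^ (k + 2) * 2 ^ (-((k : ℝ) - 1)) = 8 := by
    rw [← rpow_natCast, ← rpow_add two_pos,
      show ((k + 2 : ℕ) : ℝ) + -((k : ℝ) - 1) = 3 by push_cast; ring]
    norm_num
  have hmul : (2 : ℝ) ^ (k + 2) * 2 ^ (-((k : ℝ) - 1)) ≤ a * 2 ^ (-((k : ℝ) - 1)) := by gcongr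
  linarith

theorem cell_length_core_general {d : ℝ} (hd : 1 ≤ d) {k : ℕ} (hk : 1 ≤ k) {n : ℕ → ℝ}
    (hhalf : ∀ j, 1 ≤ j → j ≤ k → 2 * n j ≤ n (j - 1)) {c : ℝ} (hc : 0 < c)
    (hlast : c ≤ n (k - 1)) (hleaf : 0 ≤ n k) :
    ∏ j ∈ Icc 1 k, sqSideFactor d (n (j - 1)) (n j) ≤
      exp (6 / c / (4 * d - 3)) * (1 - 3 / (4 * d)) ^ k := by
  have hd₃ : 0 < 4 * d - 3 := by linarith
  have hq : 0 ≤ 1 - 3 / (4 * d) := one_sub_three_div_four_mul_nonneg (by linarith)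
  obtain ⟨k, rfl⟩ := Nat.exists_eq_add_of_le' hk
  have hinv : 3 / (4 * d - 3) * (2 * (n k)⁻¹) ≤ 6 / c / (4 * d - 3) := calc
    3 / (4 * d - 3) * (2 * (n k)⁻¹) ≤ 3 / (4 * d - 3) * (2 * c⁻¹) := by gcongr; exact hlast
    _ = 6 / c / (4 * d - 3) := by ring
  calc ∏ j ∈ Icc 1 (k + 1), sqSideFactor d (n (j - 1)) (n j)
      = ∏ i ∈ range (k + 1), sqSideFactor d (n i) (n (i + 1)) := by
        rw [← Ico_add_one_right_eq_Icc, prod_Ico_eq_prod_range]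
        simp only [Nat.add_sub_cancel, add_comm 1]
    _ ≤ exp (3 / (4 * d - 3) * (2 * (n k)⁻¹)) * (1 - 3 / (4 * d)) ^ (k + 1) :=
        prod_range_sqSideFactor_le hd (fun i hi ↦ hhalf (i + 1) (by omega) (by omega))
          (hc.trans_le hlast) hleaf
    _ ≤ exp (6 / c / (4 * d - 3)) * (1 - 3 / (4 * d)) ^ (k + 1) := by gcongr

/-- Deterministic core of the cell-length lemma for median forests: the product of
the factors (d-1)/d + (1/d)·((n_j+1)(n_j+2))/((n_{j-1}+1)(n_{j-1}+2)) over the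
levels j = 1,…,k is bounded by exp(12/(4d-3))·(1 - 3/(4d))^k. -/
theorem cell_length_core (d k a : ℕ) (hd : 1 ≤ d) (hk : 1 ≤ k)
    (ha : 2 ^ (k + 2) ≤ a) (n : ℕ → ℕ) (hn0 : n 0 = a)
    (hhalf : ∀ j, 1 ≤ j → j ≤ k → 2 * n j ≤ n (j - 1))
    (hlow : ∀ j, 1 ≤ j → j ≤ k →
      ((n (j - 1) : ℝ)) ≥ (a : ℝ) * (2 : ℝ) ^ (-((j : ℝ) - 1)) - 2) :
    ∏ j ∈ Finset.Icc 1 k,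
      (((d : ℝ) - 1) / (d : ℝ) +
        (1 / (d : ℝ)) *
          (((n j : ℝ) + 1) * ((n j : ℝ) + 2)) /
            (((n (j - 1) : ℝ) + 1) * ((n (j - 1) : ℝ) + 2))) ≤
      Real.exp (12 / (4 * (d : ℝ) - 3)) * (1 - 3 / (4 * (d : ℝ))) ^ k := by
  have hlast : (6 : ℝ) ≤ n (k - 1) :=
    (six_le_mul_two_rpow_sub_two (by exact_mod_cast ha)).trans (hlow k hk le_rfl)
  have hbound := cell_length_core_general (d := d) (n := fun j ↦ n j) (c := 1 / 2)
    (by exact_mod_cast hd) hk (by exact_mod_cast hhalf) one_half_pos (by linarith)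
    (Nat.cast_nonneg _)
  rwa [show (6 : ℝ) / (1 / 2) = 12 by norm_num] at hbound
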